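/- Let B = (b_ij) be a real n×n matrix with b_ii < 0 for all i, and let a < 0 be a real number. Assume B is multiplicative D-negative: for every n×n positive diagonal matrix D, all eigenvalues of DB are real and negative. Then for every n×n positive diagonal matrix D, the 2n×2n block matrix [[a·I_n, D·B], [I_n, 0]] is Hurwitz stable. -/

import Mathlib

open Matrix

/-- The spectrum of a real square matrix, viewed as a subset of `ℂ`:
the set of complex roots of its characteristic polynomial. -/
def spec {m : Type*} [Fintype m] [DecidableEq m] (M : Matrix m m ℝ) : Set ℂ :=
  spectrum ℂ (M.map (Complex.ofReal ·))

/-- A real square matrix is Hurwitz stable if every eigenvalue has negative real part. -/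
def HurwitzStable {m : Type*} [Fintype m] [DecidableEq m] (M : Matrix m m ℝ) : Prop :=
  ∀ z ∈ spec M, z.re < 0

lemma mem_spec_iff' {m : Type*} [Fintype m] [DecidableEq m] (A : Matrix m m ℂ) (z : ℂ) :
    z ∈ spectrum ℂ A ↔ ∃ v, v ≠ 0 ∧ A *ᵥ v = z • v := by
  rw [spectrum.mem_iff, Matrix.isUnit_iff_isUnit_det, isUnit_iff_ne_zero, not_not,
    ← Matrix.exists_mulVec_eq_zero_iff]
  refine exists_congr fun v => and_congr_right fun _ => ?_
  rw [Matrix.sub_mulVec, sub_eq_zero, Algebra.algebraMap_eq_smul_one, Matrix.smul_mulVec,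
    Matrix.one_mulVec, eq_comm]

theorem stmt2 {n : ℕ} (B : Matrix (Fin n) (Fin n) ℝ) (a : ℝ)
    (hBneg : ∀ i, B i i < 0) (ha : a < 0)
    (hDneg : ∀ d : Fin n → ℝ, (∀ i, 0 < d i) →
      ∀ z ∈ spec ((Matrix.diagonal d) * B), z.im = 0 ∧ z.re < 0) :
    ∀ d : Fin n → ℝ, (∀ i, 0 < d i) →
      HurwitzStable (Matrix.fromBlocks (a • (1 : Matrix (Fin n) (Fin n) ℝ))
        ((Matrix.diagonal d) * B) 1 0) := by
  intro d hd z hz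
  have hz' := (mem_spec_iff' _ z).1 hz
  obtain ⟨w, hw, hE⟩ := hz'
  set M := Matrix.diagonal d * B with hM
  have hA : (Matrix.fromBlocks (a • (1 : Matrix (Fin n) (Fin n) ℝ)) M (1 : Matrix (Fin n) (Fin n) ℝ) (0 : Matrix (Fin n) (Fin n) ℝ)).map (Complex.ofReal ·)
      = Matrix.fromBlocks ((a : ℂ) • (1 : Matrix (Fin n) (Fin n) ℂ))
        (M.map (Complex.ofReal ·)) (1 : Matrix (Fin n) (Fin n) ℂ) (0 : Matrix (Fin n) (Fin n) ℂ) := by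
    rw [Matrix.fromBlocks_map]
    congr 1
    · ext i j; by_cases h : i = j <;> simp [Matrix.one_apply, h]
    · ext i j; by_cases h : i = j <;> simp [Matrix.one_apply, h]
  rw [hA, Matrix.fromBlocks_mulVec] at hE
  have h1 : ∀ i, (a : ℂ) * w (Sum.inl i) + (M.map (Complex.ofReal ·) *ᵥ (w ∘ Sum.inr)) i
      = z * w (Sum.inl i) := fun i => by
    simpa [Matrix.smul_mulVec] using congrFun hE (Sum.inl i)
  have h2 : ∀ i, w (Sum.inl i) = z * w (Sum.inr i) := fun i => by
    simpa using congrFun hE (Sum.inr i)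
  have hmem : z ^ 2 - a * z ∈ spec M := by
    refine (mem_spec_iff' _ _).2 ⟨w ∘ Sum.inr, ?_, ?_⟩
    · intro h0
      have h3 : ∀ i, w (Sum.inr i) = 0 := fun i => congrFun h0 i
      apply hw
      ext (i | i)
      · simp [h2, h3]
      · simp [h3]
    · ext i
      have := h1 i
      rw [h2 i] at this
      simp only [Pi.smul_apply, smul_eq_mul, Function.comp_apply]
      linear_combination this
  obtain ⟨him, hre⟩ := hDneg d hd _ hmem
  simp [pow_two] at him hre
  have h4 : z.im * (2 * z.re - a) = 0 := by linarith
  rcases mul_eq_zero.1 h4 with h | h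
  · rw [h] at hre
    by_contra hc
    push Not at hc
    nlinarith
  · linarith
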